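/- Let D > 1 and let F = (F₁,…,F_R) be a system of degree-D forms in ℤ[x₁,…,x_n]. Define the bihomogeneous system G(x;y) = F(x₁y₁,…,x_ny_n). Let V*_{G,1} = {(x,y) ∈ 𝔸^{2n} : rank J_{G,1} < R} where J_{G,1} is the matrix of partial derivatives of G with respect to x₁,…,x_n, and similarly V*_{G,2} with respect to y. Then min{codim V*_{G,1}, codim V*_{G,2}} ≥ codim V*_F / (R+1), where V*_F = {x ∈ 𝔸ⁿ : rank J_F(x) < R} and codim denotes codimension in the ambient affine space. -/

import Mathlib

/-!
Write `z_j = x_j y_j` and let `J_F` be the Jacobian matrix of `F`. By the chain rule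
`J_{G,1} = J_F(z) · diag(y)`, so the minor of `J_{G,1}` on columns `c` is
`∏ j, y_{c j}` times the corresponding minor of `J_F` at `z` (`minor_hadamard`).

Let `P` be a prime containing the minors of `J_{G,1}` with `dim ℂ[x,y]/P ≥ d`, the dimension of
the degeneracy locus. Put `I = {j | y_j ∈ P}`, `k = |I|`, and let `Q` be the kernel of
`φ : ℂ[z] → ℂ[x,y]/P`, `z_j ↦ x_j y_j`. Every minor of `J_F` that avoids the columns in `I` lies
in `Q`.

* `ℂ[x,y]/P` is generated by the `x_j` and the `y_j` with `j ∉ I`, hence `d ≤ 2n - k`.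
* Over the image of `φ` it is algebraic over the `n` elements `x_j` (`j ∈ I`) and `y_j`
  (`j ∉ I`), because `x_j = z_j / y_j` for `j ∉ I`. Hence `d ≤ n + dim ℂ[z]/Q`.
* `dim ℂ[z]/Q ≤ dim V*_F + kR` (`dim_le_of_minors`). The minors are homogeneous, so `Q` may be
  replaced by its homogeneous core, which lies in the ideal of the origin. The `kR` entries of the
  columns of `J_F` in `I` have positive degree, so they vanish at the origin; killing them lands in
  `V*_F`, and by Krull's height theorem at the origin the dimension drops by at most `kR`.
  The local dimension at the origin is the global one since finitely generated domains over
  a field are equidimensional (`dim_facts`).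

Adding `R` times the first inequality to the second gives
`(R + 1)(2n - d) ≥ kR + n - dim V*_F - kR = n - dim V*_F`. The statement for `J_{G,2}` follows by
exchanging the roles of `x` and `y`.
-/

open BigOperators

/-- The set of all `R×R` minors of the Jacobian-type matrix whose `(i,j)` entry is
`∂(P i)/∂(emb j')` for a choice `c : Fin R → ι` of columns (through the column
labelling `emb : ι → σ`). Its zero locus is the locus where the corresponding
`R × ι` matrix of partial derivatives has rank `< R`. -/
noncomputable def minorSet {σ ι : Type} {R : ℕ} (P : Fin R → MvPolynomial σ ℂ)
    (emb : ι → σ) : Set (MvPolynomial σ ℂ) :=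
  Set.range fun c : Fin R → ι =>
    Matrix.det (Matrix.of fun i j : Fin R => MvPolynomial.pderiv (emb (c j)) (P i))

/-! ### Dimension of finitely generated algebras -/

/-- Every maximal ideal of a polynomial ring over a field has height the number of variables. The
induction uses that maximal ideals of `B[X]` contract to maximal ideals of the Jacobson ring `B`. -/
theorem mvPolynomial_height_of_isMaximal (k : Type) [Field k] (s : ℕ)
    (m : Ideal (MvPolynomial (Fin s) k)) [hm : m.IsMaximal] : m.height = s := by
  induction s with
  | zero =>
    refine le_antisymm ?_ (by simp)
    have := Ideal.height_le_ringKrullDim_of_isPrime (I := m)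
    rw [MvPolynomial.ringKrullDim_of_isNoetherianRing, ringKrullDim_eq_zero_of_field] at this
    simpa using this
  | succ s ih =>
    let e := (MvPolynomial.finSuccEquiv k s).toRingEquiv
    have hM : (m.comap e.symm).IsMaximal := Ideal.comap_isMaximal_of_equiv e.symm
    have h1 := RingEquiv.height_comap e.symm m
    let p : Ideal (MvPolynomial (Fin s) k) := (m.comap e.symm).comap Polynomial.C
    have hp : p.IsMaximal := Polynomial.isMaximal_comap_C_of_isJacobsonRing (m.comap e.symm)
    have hl : (m.comap e.symm).LiesOver p := ⟨rfl⟩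
    have h2 := Polynomial.height_eq_height_add_one p (m.comap e.symm)
    rw [ih] at h2
    rw [← h1, h2]
    push_cast
    rfl

/-- A finitely generated domain over a field has Krull dimension equal to its transcendence degree,
and all its maximal ideals have this height. All three follow from Noether normalization: the
extension of the polynomial ring is integral, and satisfies going down because the polynomial ring
is normal. -/
theorem dim_facts (k A : Type) [Field k] [CommRing A] [IsDomain A] [Algebra k A]
    [Algebra.FiniteType k A] :
    ∃ s : ℕ, ringKrullDim A = s ∧ Algebra.trdeg k A = s ∧
      ∀ m : Ideal A, m.IsMaximal → m.height = s := by
  obtain ⟨s, g, hg, hint⟩ := exists_integral_inj_algHom_of_fg k A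
  have hN : IsNoetherianRing A := Algebra.FiniteType.isNoetherianRing k A
  algebraize [g.toRingHom]
  have hinj : Function.Injective (algebraMap (MvPolynomial (Fin s) k) A) := hg
  have : FaithfulSMul (MvPolynomial (Fin s) k) A := (faithfulSMul_iff_algebraMap_injective _ _).2 hg
  have : Algebra.IsIntegral (MvPolynomial (Fin s) k) A := ⟨hint⟩
  have : IsScalarTower k (MvPolynomial (Fin s) k) A := IsScalarTower.of_algHom g
  have hle : ringKrullDim A ≤ s := by
    have : ringKrullDim (MvPolynomial (Fin s) k) = s := by
      rw [MvPolynomial.ringKrullDim_of_isNoetherianRing, ringKrullDim_eq_zero_of_field]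
      simp
    rw [← this]
    refine Order.krullDim_le_of_strictMono
      (PrimeSpectrum.comap (algebraMap (MvPolynomial (Fin s) k) A)) ?_
    intro p q hpq
    exact Ideal.IsIntegral.comap_lt_comap hpq
  have hht : ∀ m : Ideal A, m.IsMaximal → m.height = s := by
    intro m hm
    refine le_antisymm ?_ ?_
    · have := (Ideal.height_le_ringKrullDim_of_isPrime (I := m)).trans hle
      exact_mod_cast this
    · have hmax := Ideal.isMaximal_comap_of_isIntegral_of_isMaximal
        (R := MvPolynomial (Fin s) k) m
      have : (m.under (MvPolynomial (Fin s) k)).IsMaximal := hmax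
      rw [Ideal.height_eq_height_add_of_liesOver_of_hasGoingDown
        (m.under (MvPolynomial (Fin s) k)) m, mvPolynomial_height_of_isMaximal]
      exact le_self_add
  refine ⟨s, le_antisymm hle ?_, ?_, hht⟩
  · obtain ⟨m, hm⟩ := Ideal.exists_maximal A
    have := Ideal.height_le_ringKrullDim_of_isPrime (I := m)
    rw [hht m hm] at this
    exact_mod_cast this
  · rw [← trdeg_add_eq k (MvPolynomial (Fin s) k), MvPolynomial.trdeg_of_isDomain,
      trdeg_eq_zero]
    simp

theorem ringKrullDim_quotient_span_of_topologicalKrullDim {A : Type} [CommRing A]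
    (S : Set A) (d : ℕ)
    (h : topologicalKrullDim ↥(PrimeSpectrum.zeroLocus S) = ((d : ℕ∞) : WithBot ℕ∞)) :
    ringKrullDim (A ⧸ Ideal.span S) = d := by
  rw [← PrimeSpectrum.topologicalKrullDim_eq_ringKrullDim]
  have hc := PrimeSpectrum.isClosedEmbedding_comap_of_surjective _
    (Ideal.Quotient.mk (Ideal.span S)) Ideal.Quotient.mk_surjective
  have hr : Set.range (PrimeSpectrum.comap (Ideal.Quotient.mk (Ideal.span S))) =
      PrimeSpectrum.zeroLocus S := by
    rw [range_comap_of_surjective _ _ Ideal.Quotient.mk_surjective, Ideal.mk_ker,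
      PrimeSpectrum.zeroLocus_span]
  have := (hc.isEmbedding.toHomeomorph.isHomeomorph).topologicalKrullDim_eq
  rw [this, hr, h]
  rfl

/-- The bottom `P` of a chain of primes of length `d` above `I` satisfies `dim A/P ≥ d`. -/
theorem exists_prime_of_le_ringKrullDim {A : Type} [CommRing A] (d : ℕ) (I : Ideal A)
    (h : ringKrullDim (A ⧸ I) = d) :
    ∃ P : Ideal A, P.IsPrime ∧ I ≤ P ∧ (d : WithBot ℕ∞) ≤ ringKrullDim (A ⧸ P) := by
  rw [ringKrullDim_quotient] at h
  obtain ⟨l, hl⟩ := (Order.le_krullDim_iff (n := d)).1 h.ge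
  refine ⟨l.head.1.asIdeal, l.head.1.isPrime, l.head.2, ?_⟩
  rw [ringKrullDim_quotient, ← hl]
  let chain : LTSeries (PrimeSpectrum.zeroLocus (l.head.1.asIdeal : Set A)) :=
    { length := l.length
      toFun := fun i => ⟨(l i).1, by exact LTSeries.head_le l i⟩
      step := fun i => l.step i }
  exact Order.LTSeries.length_le_krullDim chain

/-! ### Homogeneous ideals and the degeneracy locus of `F` -/

section
attribute [local instance] MvPolynomial.gradedAlgebra

/-- The homogeneous core of a prime ideal of `ℂ[z]` is prime, is contained in the ideal of the origin,
and contains the same homogeneous polynomials. -/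
theorem exists_homogeneous_prime {n : ℕ} (Q : Ideal (MvPolynomial (Fin n) ℂ)) (hQ : Q.IsPrime) :
    ∃ Q' : Ideal (MvPolynomial (Fin n) ℂ), Q'.IsPrime ∧ Q' ≤ Q ∧
      Q' ≤ RingHom.ker (MvPolynomial.constantCoeff (σ := Fin n) (R := ℂ)) ∧
      ∀ (f : MvPolynomial (Fin n) ℂ) (e : ℕ), f.IsHomogeneous e → f ∈ Q → f ∈ Q' := by
  have hle := Ideal.toIdeal_homogeneousCore_le (MvPolynomial.homogeneousSubmodule (Fin n) ℂ) Q
  refine ⟨(Q.homogeneousCore (MvPolynomial.homogeneousSubmodule (Fin n) ℂ)).toIdeal,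
    hQ.homogeneousCore, hle, ?_, ?_⟩
  · intro f hf
    have h0 := (MvPolynomial.mem_iff_homogeneousComponent_mem
      (Q.homogeneousCore (MvPolynomial.homogeneousSubmodule (Fin n) ℂ)).isHomogeneous f).1 hf 0
    rw [MvPolynomial.homogeneousComponent_zero] at h0
    rw [RingHom.mem_ker]
    by_contra hne
    exact hQ.ne_top (Ideal.eq_top_of_isUnit_mem _ (hle h0)
      ((isUnit_iff_ne_zero.2 hne).map MvPolynomial.C))
  · intro f e hf hfQ
    exact Ideal.mem_homogeneousCore_of_homogeneous_of_mem ⟨e, hf⟩ hfQ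
end

theorem isHomogeneous_minor {n R D : ℕ} (F : Fin R → MvPolynomial (Fin n) ℂ)
    (hF : ∀ i, (F i).IsHomogeneous D) (c : Fin R → Fin n) :
    (Matrix.det (Matrix.of fun i j : Fin R => MvPolynomial.pderiv (c j) (F i))).IsHomogeneous
      (∑ _i : Fin R, (D - 1)) := by
  rw [Matrix.det_apply]
  refine MvPolynomial.IsHomogeneous.sum _ _ _ fun τ _ => ?_
  rw [Units.smul_def, zsmul_eq_mul, ← map_intCast (MvPolynomial.C (σ := Fin n) (R := ℂ))]
  refine MvPolynomial.IsHomogeneous.C_mul ?_ _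
  exact MvPolynomial.IsHomogeneous.prod _ _ _ fun i _ => (hF _).pderiv

theorem det_mem_of_column_mem {B : Type} [CommRing B] {R : ℕ} (J : Ideal B)
    (M : Matrix (Fin R) (Fin R) B) (j : Fin R) (h : ∀ i, M i j ∈ J) : M.det ∈ J := by
  rw [← Ideal.Quotient.eq_zero_iff_mem, RingHom.map_det]
  exact Matrix.det_eq_zero_of_column_eq_zero j fun i => Ideal.Quotient.eq_zero_iff_mem.2 (h i)

/-- If `J` maps into the ideal spanned by `T` in `B/Q`, then cutting `Spec (B/Q)` by `T` lands in
`Spec (B/J)`. -/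
theorem ringKrullDim_quotient_quotient_le {B : Type} [CommRing B] (J Q : Ideal B)
    (T : Set (B ⧸ Q)) (h : J ≤ (Ideal.span T).comap (Ideal.Quotient.mk Q)) :
    ringKrullDim ((B ⧸ Q) ⧸ Ideal.span T) ≤ ringKrullDim (B ⧸ J) := by
  refine ringKrullDim_le_of_surjective
    (Ideal.Quotient.lift J ((Ideal.Quotient.mk (Ideal.span T)).comp (Ideal.Quotient.mk Q))
      fun x hx => Ideal.Quotient.eq_zero_iff_mem.2 (h hx)) ?_
  exact Ideal.Quotient.lift_surjective_of_surjective _ _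
    (Ideal.Quotient.mk_surjective.comp Ideal.Quotient.mk_surjective)

/-- If all minors of `J_F` avoiding the columns in `I` vanish modulo the prime `Q`, then
`dim ℂ[z]/Q ≤ dim V*_F + |I| R`: once the `|I| R` entries in the columns `I` are killed, all minors
vanish, and these entries vanish at the origin since their degree is `D - 1 > 0`. -/
theorem dim_le_of_minors {n R D dF : ℕ} (hD : 1 < D) (F : Fin R → MvPolynomial (Fin n) ℂ)
    (hF : ∀ i, (F i).IsHomogeneous D) (I : Finset (Fin n))
    (hdF : ringKrullDim (MvPolynomial (Fin n) ℂ ⧸ Ideal.span (minorSet F id)) = dF)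
    (Q : Ideal (MvPolynomial (Fin n) ℂ)) (hQ : Q.IsPrime)
    (hmin : ∀ c : Fin R → Fin n, (∀ i, c i ∉ I) →
      Matrix.det (Matrix.of fun i j : Fin R => MvPolynomial.pderiv (c j) (F i)) ∈ Q) :
    ringKrullDim (MvPolynomial (Fin n) ℂ ⧸ Q) ≤ ((dF + I.card * R : ℕ) : WithBot ℕ∞) := by
  obtain ⟨Q', hQ', hle, hker, hmem⟩ := exists_homogeneous_prime Q hQ
  -- it suffices to bound the dimension of the cone cut out by `Q'`, which contains the origin
  refine (ringKrullDim_le_of_surjective (Ideal.Quotient.factor hle)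
    (Ideal.Quotient.factor_surjective hle)).trans ?_
  obtain ⟨s, hs, -, hht⟩ := dim_facts ℂ (MvPolynomial (Fin n) ℂ ⧸ Q')
  set m := RingHom.ker (MvPolynomial.constantCoeff (σ := Fin n) (R := ℂ)) with hm
  have hmax : m.IsMaximal := RingHom.ker_isMaximal_of_surjective _
    fun x => ⟨MvPolynomial.C x, by simp⟩
  have hmax' : (m.map (Ideal.Quotient.mk Q')).IsMaximal := by
    refine (Ideal.map_eq_top_or_isMaximal_of_surjective _ Ideal.Quotient.mk_surjective
      hmax).resolve_left fun h => hmax.ne_top ?_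
    have := Ideal.comap_map_of_surjective' (Ideal.Quotient.mk Q') Ideal.Quotient.mk_surjective m
    rw [h, Ideal.comap_top, Ideal.mk_ker, sup_eq_left.2 hker] at this
    exact this.symm
  have hprime := hmax'.isPrime
  classical
  -- `T` consists of the entries of the Jacobian matrix in the columns `I`
  let T : Finset (MvPolynomial (Fin n) ℂ ⧸ Q') := (I ×ˢ (Finset.univ : Finset (Fin R))).image
    fun p => Ideal.Quotient.mk Q' (MvPolynomial.pderiv p.1 (F p.2))
  have hT : T.card ≤ I.card * R := by
    refine Finset.card_image_le.trans ?_
    simp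
  have hTm : (T : Set (MvPolynomial (Fin n) ℂ ⧸ Q')) ⊆ m.map (Ideal.Quotient.mk Q') := by
    intro x hx
    obtain ⟨p, -, rfl⟩ := Finset.mem_image.1 hx
    refine Ideal.mem_map_of_mem _ ?_
    rw [hm, RingHom.mem_ker, MvPolynomial.constantCoeff_eq]
    exact (hF p.2).pderiv.coeff_eq_zero (by simp; omega)
  have h1 := Ideal.height_le_ringKrullDim_quotient_add_encard
    (p := m.map (Ideal.Quotient.mk Q')) (T : Set (MvPolynomial (Fin n) ℂ ⧸ Q')) hTm
  rw [hht _ hmax', Set.encard_coe_eq_coe_finsetCard] at h1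
  have hspan : Ideal.span (minorSet F id) ≤
      (Ideal.span (T : Set (MvPolynomial (Fin n) ℂ ⧸ Q'))).comap (Ideal.Quotient.mk Q') := by
    rw [Ideal.span_le]
    rintro _ ⟨c, rfl⟩
    rw [SetLike.mem_coe, Ideal.mem_comap]
    by_cases hc : ∀ i, c i ∉ I
    · have : Matrix.det (Matrix.of fun i j : Fin R => MvPolynomial.pderiv (c j) (F i)) ∈ Q' :=
        hmem _ _ (isHomogeneous_minor F hF c) (hmin c hc)
      have h0 := Ideal.Quotient.eq_zero_iff_mem.2 this
      simp only [id]
      rw [h0]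
      exact zero_mem _
    · push Not at hc
      obtain ⟨j, hj⟩ := hc
      -- every entry of column `j` of this minor belongs to `T`
      refine Ideal.mem_comap.1 (det_mem_of_column_mem _ _ j fun i => ?_)
      refine Ideal.mem_comap.2 (Ideal.subset_span ?_)
      exact Finset.mem_coe.2 (Finset.mem_image.2
        ⟨(c j, i), Finset.mem_product.2 ⟨hj, Finset.mem_univ _⟩, rfl⟩)
  have h2 := ringKrullDim_quotient_quotient_le _ Q' _ hspan
  rw [hdF] at h2
  rw [hs]
  calc (s : WithBot ℕ∞) ≤ _ := h1
    _ ≤ (dF : WithBot ℕ∞) + (T.card : ℕ) := by gcongr; rfl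
    _ ≤ ((dF + I.card * R : ℕ) : WithBot ℕ∞) := by exact_mod_cast Nat.add_le_add_left hT dF

/-! ### The substitution `z = x∘y` -/

/-- The substitution `z_t ↦ X_{a t} X_{b t}`. With `σ = Fin n ⊕ Fin n` and `a`, `b` the two inclusions
it turns `F` into the bihomogeneous form `G`; leaving `a` and `b` free treats the derivatives with
respect to `x` and `y` simultaneously. -/
noncomputable def hadamard {n : ℕ} {σ : Type} (a b : Fin n → σ) :
    MvPolynomial (Fin n) ℂ →ₐ[ℂ] MvPolynomial σ ℂ :=
  MvPolynomial.aeval fun t => MvPolynomial.X (a t) * MvPolynomial.X (b t)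

theorem pderiv_hadamard {n : ℕ} {σ : Type} (a b : Fin n → σ) (ha : Function.Injective a)
    (hab : ∀ i j, a i ≠ b j) (j : Fin n) (f : MvPolynomial (Fin n) ℂ) :
    MvPolynomial.pderiv (a j) (hadamard a b f) =
      MvPolynomial.X (b j) * hadamard a b (MvPolynomial.pderiv j f) := by
  classical
  induction f using MvPolynomial.induction_on with
  | C c => simp [hadamard]
  | add p q hp hq => simp only [map_add, hp, hq, mul_add]
  | mul_X p t hp =>
    have hX : hadamard a b (MvPolynomial.X t) = MvPolynomial.X (a t) * MvPolynomial.X (b t) := by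
      simp [hadamard]
    have h1 : MvPolynomial.pderiv (a j) (MvPolynomial.X (b t) : MvPolynomial σ ℂ) = 0 :=
      MvPolynomial.pderiv_X_of_ne (hab j t).symm
    rw [map_mul, Derivation.leibniz, hp, Derivation.leibniz, map_add, hX]
    simp only [smul_eq_mul, map_mul, hX, Derivation.leibniz, h1, mul_zero, zero_add]
    by_cases h : t = j
    · subst h
      simp only [MvPolynomial.pderiv_X_self, map_one]
      ring
    · rw [MvPolynomial.pderiv_X_of_ne (fun h' => h (ha h')), MvPolynomial.pderiv_X_of_ne h]
      simp only [map_zero]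
      ring

/-- The minors of `J_{G,1} = J_F(x∘y) · diag(y)`. -/
theorem minor_hadamard {n R : ℕ} {σ : Type} (a b : Fin n → σ) (ha : Function.Injective a)
    (hab : ∀ i j, a i ≠ b j) (F : Fin R → MvPolynomial (Fin n) ℂ) (c : Fin R → Fin n) :
    Matrix.det (Matrix.of fun i j : Fin R =>
      MvPolynomial.pderiv (a (c j)) (hadamard a b (F i))) =
    (∏ j, MvPolynomial.X (b (c j))) * hadamard a b (Matrix.det (Matrix.of fun i j : Fin R =>
      MvPolynomial.pderiv (c j) (F i))) := by
  rw [AlgHom.map_det, ← Matrix.det_mul_row]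
  congr 1
  ext1 i j
  simp only [Matrix.of_apply, pderiv_hadamard a b ha hab, AlgHom.mapMatrix_apply, Matrix.map_apply]

theorem isAlgebraic_adjoin_of_X {σ : Type} (P : Ideal (MvPolynomial σ ℂ)) [P.IsPrime]
    (K : Subalgebra ℂ (MvPolynomial σ ℂ ⧸ P)) (S : Set (MvPolynomial σ ℂ ⧸ P))
    (h : ∀ v, IsAlgebraic (Algebra.adjoin K S) (Ideal.Quotient.mk P (MvPolynomial.X v))) :
    Algebra.IsAlgebraic (Algebra.adjoin K S) (MvPolynomial σ ℂ ⧸ P) := by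
  constructor
  intro x
  obtain ⟨f, rfl⟩ := Ideal.Quotient.mk_surjective x
  induction f using MvPolynomial.induction_on with
  | C c =>
    have : Nontrivial (Algebra.adjoin K S) :=
      ⟨0, 1, fun h => zero_ne_one (congrArg Subtype.val h)⟩
    exact isAlgebraic_algebraMap (R := Algebra.adjoin K S) (A := MvPolynomial σ ℂ ⧸ P)
      (algebraMap ℂ (Algebra.adjoin K S) c)
  | add p q hp hq => rw [map_add]; exact hp.add hq
  | mul_X p t hp => rw [map_mul]; exact hp.mul (h t)

/-- The two dimension estimates for the degeneracy locus of `J_{G,1}`, where `k` is the number of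
coordinates `y_j` vanishing identically on a component of maximal dimension. -/
theorem dim_bound {n R D dF d : ℕ} {σ : Type} [Finite σ] (hD : 1 < D) (a b : Fin n → σ)
    (ha : Function.Injective a) (hab : ∀ i j, a i ≠ b j)
    (hcov : ∀ v, (∃ i, v = a i) ∨ ∃ i, v = b i)
    (F : Fin R → MvPolynomial (Fin n) ℂ) (hF : ∀ i, (F i).IsHomogeneous D)
    (hdF : ringKrullDim (MvPolynomial (Fin n) ℂ ⧸ Ideal.span (minorSet F id)) = dF)
    (hd : ringKrullDim (MvPolynomial σ ℂ ⧸
      Ideal.span (minorSet (fun i => hadamard a b (F i)) a)) = d) :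
    ∃ k ≤ n, d + k ≤ 2 * n ∧ d ≤ n + (dF + k * R) := by
  classical
  obtain ⟨P, hP, hIP, hdP⟩ := exists_prime_of_le_ringKrullDim d _ hd
  let A := MvPolynomial σ ℂ ⧸ P
  let π : MvPolynomial σ ℂ →ₐ[ℂ] A := Ideal.Quotient.mkₐ ℂ P
  let x : Fin n → A := fun i => π (MvPolynomial.X (a i))
  let y : Fin n → A := fun i => π (MvPolynomial.X (b i))
  let I : Finset (Fin n) := Finset.univ.filter fun j => y j = 0
  have hI : ∀ j, j ∈ I ↔ y j = 0 := fun j => by simp [I]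
  let φ : MvPolynomial (Fin n) ℂ →ₐ[ℂ] A := π.comp (hadamard a b)
  have hφX : ∀ j, φ (MvPolynomial.X j) = x j * y j := fun j => by simp [φ, hadamard, x, y]
  let Q : Ideal (MvPolynomial (Fin n) ℂ) := RingHom.ker φ
  have hQ : Q.IsPrime := RingHom.ker_isPrime φ
  have hmin : ∀ c : Fin R → Fin n, (∀ i, c i ∉ I) →
      Matrix.det (Matrix.of fun i j : Fin R => MvPolynomial.pderiv (c j) (F i)) ∈ Q := by
    intro c hc
    have h1 : Matrix.det (Matrix.of fun i j : Fin R =>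
        MvPolynomial.pderiv (a (c j)) (hadamard a b (F i))) ∈ P :=
      hIP (Ideal.subset_span ⟨c, rfl⟩)
    rw [minor_hadamard a b ha hab] at h1
    have h2 : π _ = 0 := Ideal.Quotient.eq_zero_iff_mem.2 h1
    rw [map_mul, map_prod, mul_eq_zero, Finset.prod_eq_zero_iff] at h2
    refine h2.resolve_left ?_
    rintro ⟨j, -, hj⟩
    exact hc j ((hI _).2 hj)
  have hdimQ := dim_le_of_minors hD F hF I hdF Q hQ hmin
  obtain ⟨t, htdim, httr, -⟩ := dim_facts ℂ A
  have hdt : d ≤ t := by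
    have := hdP.trans_eq htdim
    exact_mod_cast this
  obtain ⟨q, hqdim, hqtr, -⟩ := dim_facts ℂ (MvPolynomial (Fin n) ℂ ⧸ Q)
  have hq : q ≤ dF + I.card * R := by
    rw [hqdim] at hdimQ
    exact_mod_cast hdimQ
  have hcard : Iᶜ.card + I.card = n := by
    simp
  refine ⟨I.card, by omega, ?_, ?_⟩
  · -- `A` is generated by all `x j` and the nonzero `y j`
    let S : Finset A := Finset.univ.image x ∪ Iᶜ.image y
    have hS : S.card ≤ n + Iᶜ.card := by
      refine (Finset.card_union_le _ _).trans (Nat.add_le_add ?_ Finset.card_image_le)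
      exact Finset.card_image_le.trans (by simp)
    have halg : Algebra.IsAlgebraic (Algebra.adjoin ℂ (S : Set A)) A := by
      constructor
      intro z
      obtain ⟨f, rfl⟩ := Ideal.Quotient.mk_surjective z
      have hf : Ideal.Quotient.mk P f ∈ Algebra.adjoin ℂ (S : Set A) := by
        induction f using MvPolynomial.induction_on with
        | C c => exact Subalgebra.algebraMap_mem _ c
        | add p q hp hq => rw [map_add]; exact add_mem hp hq
        | mul_X p v hp =>
          rw [map_mul]
          refine mul_mem hp ?_
          rcases hcov v with ⟨j, rfl⟩ | ⟨j, rfl⟩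
          · exact Algebra.subset_adjoin (Finset.mem_coe.2 (Finset.mem_union_left _
              (Finset.mem_image.2 ⟨j, Finset.mem_univ _, rfl⟩)))
          · by_cases hj : y j = 0
            · have : Ideal.Quotient.mk P (MvPolynomial.X (b j)) = 0 := hj
              rw [this]; exact zero_mem _
            · refine Algebra.subset_adjoin (Finset.mem_coe.2 (Finset.mem_union_right _ ?_))
              exact Finset.mem_image.2 ⟨j, by simp [hI, hj], rfl⟩
      exact isAlgebraic_algebraMap (⟨_, hf⟩ : Algebra.adjoin ℂ (S : Set A))
    have h := Algebra.IsAlgebraic.trdeg_le_cardinalMk ℂ (S : Set A)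
    rw [httr] at h
    have h' : t ≤ S.card := by simpa using h
    omega
  · -- over the image of `φ`, the `x j` with `y j = 0` and the nonzero `y j` suffice algebraically
    let K := φ.range
    let e : (MvPolynomial (Fin n) ℂ ⧸ Q) ≃ₐ[ℂ] K := Ideal.quotientKerEquivRange φ
    have hKtr : Algebra.trdeg ℂ K = q := by rw [← e.trdeg_eq, hqtr]
    let S : Finset A := I.image x ∪ Iᶜ.image y
    have hS : S.card ≤ n := by
      refine (Finset.card_union_le _ _).trans ?_
      have h1 : (I.image x).card ≤ I.card := Finset.card_image_le
      have h2 : (Iᶜ.image y).card ≤ Iᶜ.card := Finset.card_image_le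
      omega
    have hy : ∀ j, y j ∈ Algebra.adjoin K (S : Set A) := by
      intro j
      by_cases hj : y j = 0
      · rw [hj]; exact zero_mem _
      · refine Algebra.subset_adjoin (Finset.mem_coe.2 (Finset.mem_union_right _ ?_))
        exact Finset.mem_image.2 ⟨j, by simp [hI, hj], rfl⟩
    have hxy : ∀ j, x j * y j ∈ Algebra.adjoin K (S : Set A) := by
      intro j
      exact Subalgebra.algebraMap_mem (Algebra.adjoin K (S : Set A))
        (⟨x j * y j, MvPolynomial.X j, hφX j⟩ : K)
    have halg : Algebra.IsAlgebraic (Algebra.adjoin K (S : Set A)) A := by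
      refine isAlgebraic_adjoin_of_X P K (S : Set A) fun v => ?_
      rcases hcov v with ⟨j, rfl⟩ | ⟨j, rfl⟩
      · change IsAlgebraic _ (x j)
        by_cases hj : y j = 0
        · have : x j ∈ Algebra.adjoin K (S : Set A) :=
            Algebra.subset_adjoin (Finset.mem_coe.2 (Finset.mem_union_left _
              (Finset.mem_image.2 ⟨j, (hI j).2 hj, rfl⟩)))
          exact isAlgebraic_algebraMap (⟨_, this⟩ : Algebra.adjoin K (S : Set A))
        · -- `x j` is a root of `y j * T - x j * y j`
          let y' : Algebra.adjoin K (S : Set A) := ⟨y j, hy j⟩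
          let z' : Algebra.adjoin K (S : Set A) := ⟨x j * y j, hxy j⟩
          refine ⟨Polynomial.C y' * Polynomial.X - Polynomial.C z', fun h0 => hj ?_, ?_⟩
          · have := congrArg (fun p => Polynomial.coeff p 1) h0
            simp only [Polynomial.coeff_sub, Polynomial.coeff_C_mul, Polynomial.coeff_X_one,
              mul_one, Polynomial.coeff_C_of_ne_zero one_ne_zero, sub_zero,
              Polynomial.coeff_zero] at this
            exact congrArg Subtype.val this
          · simp only [map_sub, map_mul, Polynomial.aeval_C, Polynomial.aeval_X]
            change y j * x j - x j * y j = 0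
            ring
      · exact isAlgebraic_algebraMap (⟨_, hy j⟩ : Algebra.adjoin K (S : Set A))
    have h := Algebra.IsAlgebraic.trdeg_le_cardinalMk K (S : Set A)
    have : FaithfulSMul ℂ K :=
      (faithfulSMul_iff_algebraMap_injective _ _).2 (algebraMap ℂ K).injective
    have hsum := trdeg_add_eq ℂ K (A := A)
    rw [hKtr, httr] at hsum
    have h' : (t : Cardinal) ≤ q + S.card := by
      rw [← hsum]
      gcongr
      simpa using h
    have h'' : t ≤ q + S.card := by exact_mod_cast h'
    omega

theorem bound_of_dim {n R D dF d : ℕ} {σ : Type} [Finite σ] (hD : 1 < D) (a b : Fin n → σ)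
    (ha : Function.Injective a) (hab : ∀ i j, a i ≠ b j)
    (hcov : ∀ v, (∃ i, v = a i) ∨ ∃ i, v = b i)
    (F : Fin R → MvPolynomial (Fin n) ℂ) (hF : ∀ i, (F i).IsHomogeneous D)
    (hdF : topologicalKrullDim ↥(PrimeSpectrum.zeroLocus (minorSet F id)) =
      ((dF : ℕ∞) : WithBot ℕ∞))
    (hd : topologicalKrullDim ↥(PrimeSpectrum.zeroLocus
      (minorSet (fun i => hadamard a b (F i)) a)) = ((d : ℕ∞) : WithBot ℕ∞)) :
    ((R : ℝ) + 1) * (2 * (n : ℝ) - (d : ℝ)) ≥ (n : ℝ) - (dF : ℝ) := by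
  obtain ⟨k, -, h1, h2⟩ := dim_bound hD a b ha hab hcov F hF
    (ringKrullDim_quotient_span_of_topologicalKrullDim _ _ hdF)
    (ringKrullDim_quotient_span_of_topologicalKrullDim _ _ hd)
  have h1' : (d : ℝ) + k ≤ 2 * n := by exact_mod_cast h1
  have h2' : (d : ℝ) ≤ n + (dF + k * R) := by exact_mod_cast h2
  have := mul_le_mul_of_nonneg_left h1' (Nat.cast_nonneg (α := ℝ) R)
  linarith

/-- Proposition 3.2: for a system `F` of `R` degree-`D` forms (`D > 1`) in `n` variables
and `G(x;y) = F(x₁y₁,…,x_ny_n)`, one has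
`min{codim V*_{G,1}, codim V*_{G,2}} ≥ codim V*_F/(R+1)`,
where `V*_F`, `V*_{G,1}`, `V*_{G,2}` are the rank-degeneracy loci of the corresponding
Jacobian matrices (realized as zero loci of the `R×R` minors in the prime spectra of
`ℂ[x]` and `ℂ[x,y]`), and codimensions are taken in `𝔸ⁿ` resp. `𝔸^{2n}`. -/
theorem stmt15 (n R D : ℕ) (hD : 1 < D) (F : Fin R → MvPolynomial (Fin n) ℤ)
    (hF : ∀ i, (F i).IsHomogeneous D)
    (dF d1 d2 : ℕ)
    (hdF : topologicalKrullDim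
        ↥(PrimeSpectrum.zeroLocus
            (minorSet (fun i => (F i).map (Int.castRingHom ℂ)) (id : Fin n → Fin n)))
        = ((dF : ℕ∞) : WithBot ℕ∞))
    (hd1 : topologicalKrullDim
        ↥(PrimeSpectrum.zeroLocus
            (minorSet (fun i => MvPolynomial.aeval
                (fun t : Fin n => (MvPolynomial.X (Sum.inl t) * MvPolynomial.X (Sum.inr t) :
                  MvPolynomial (Fin n ⊕ Fin n) ℂ)) ((F i).map (Int.castRingHom ℂ)))
              (Sum.inl : Fin n → Fin n ⊕ Fin n)))
        = ((d1 : ℕ∞) : WithBot ℕ∞))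
    (hd2 : topologicalKrullDim
        ↥(PrimeSpectrum.zeroLocus
            (minorSet (fun i => MvPolynomial.aeval
                (fun t : Fin n => (MvPolynomial.X (Sum.inl t) * MvPolynomial.X (Sum.inr t) :
                  MvPolynomial (Fin n ⊕ Fin n) ℂ)) ((F i).map (Int.castRingHom ℂ)))
              (Sum.inr : Fin n → Fin n ⊕ Fin n)))
        = ((d2 : ℕ∞) : WithBot ℕ∞)) :
    ((R : ℝ) + 1) * (2 * (n : ℝ) - (d1 : ℝ)) ≥ (n : ℝ) - (dF : ℝ) ∧
    ((R : ℝ) + 1) * (2 * (n : ℝ) - (d2 : ℝ)) ≥ (n : ℝ) - (dF : ℝ) := by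
  have hFC : ∀ i, ((F i).map (Int.castRingHom ℂ)).IsHomogeneous D := fun i => (hF i).map _
  refine ⟨bound_of_dim hD Sum.inl Sum.inr Sum.inl_injective (fun i j => Sum.inl_ne_inr) ?_ _ hFC
    hdF hd1, bound_of_dim hD Sum.inr Sum.inl Sum.inr_injective (fun i j => Sum.inr_ne_inl) ?_ _ hFC
    hdF ?_⟩
  · rintro (i | i)
    exacts [Or.inl ⟨i, rfl⟩, Or.inr ⟨i, rfl⟩]
  · rintro (i | i)
    exacts [Or.inr ⟨i, rfl⟩, Or.inl ⟨i, rfl⟩]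
  · have h : hadamard (Sum.inr : Fin n → Fin n ⊕ Fin n) Sum.inl = MvPolynomial.aeval
        fun t : Fin n => MvPolynomial.X (Sum.inl t) * MvPolynomial.X (Sum.inr t) := by
      unfold hadamard
      congr 1
      funext t
      exact mul_comm _ _
    rw [h]
    exact hd2
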